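/- Let ψ be an n-qubit stabilizer state with independent generating set s_1, g_2, …, g_n of 𝒮(ψ) such that Z_1 anticommutes with s_1 and commutes with each g_i (i ≥ 2), and let ψ_+ and ψ_− be unit vectors satisfying Pψ_+ = ψ_+ for every P in the group generated by {Z_1, g_2,…,g_n} and Pψ_− = ψ_− for every P in the group generated by {−Z_1, g_2,…,g_n}. Then |⟨ψ_+, ψ⟩|² = |⟨ψ_−, ψ⟩|² = 1/2, and ψ = ⟨ψ_+, ψ⟩·ψ_+ + ⟨ψ_−, ψ⟩·ψ_−; i.e., ψ is an equal-weight superposition of the two stabilizer states ψ_±. -/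

import Mathlib

noncomputable section
namespace PaperFormal

open Matrix

/-- The space of `n`-qubit operators: matrices indexed by computational basis states. -/
abbrev QMat (n : ℕ) := Matrix (Fin n → Fin 2) (Fin n → Fin 2) ℂ

/-- The space of `n`-qubit state vectors. -/
abbrev QVec (n : ℕ) := (Fin n → Fin 2) → ℂ

def σI : Matrix (Fin 2) (Fin 2) ℂ := 1
def σX : Matrix (Fin 2) (Fin 2) ℂ := !![0, 1; 1, 0]
def σY : Matrix (Fin 2) (Fin 2) ℂ := !![0, -Complex.I; Complex.I, 0]
def σZ : Matrix (Fin 2) (Fin 2) ℂ := !![1, 0; 0, -1]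

def IsPauliFactor (m : Matrix (Fin 2) (Fin 2) ℂ) : Prop :=
  m = σI ∨ m = σX ∨ m = σY ∨ m = σZ

/-- Kronecker product over `n` qubits of single-qubit matrices. -/
def kron {n : ℕ} (σ : Fin n → Matrix (Fin 2) (Fin 2) ℂ) : QMat n :=
  fun v w => ∏ j, σ j (v j) (w j)

/-- Membership in the `n`-qubit Pauli group `𝒫_n`:
`M = i^k σ_1 ⊗ ⋯ ⊗ σ_n` with each `σ_j ∈ {I, X, Y, Z}`. -/
def IsPauli {n : ℕ} (M : QMat n) : Prop :=
  ∃ (k : Fin 4) (σ : Fin n → Matrix (Fin 2) (Fin 2) ℂ),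
    (∀ j, IsPauliFactor (σ j)) ∧ M = Complex.I ^ (k : ℕ) • kron σ

/-- A Pauli operator supported on the set `A` of qubits (identity factors outside `A`). -/
def PauliSupportedOn {n : ℕ} (M : QMat n) (A : Set (Fin n)) : Prop :=
  ∃ (k : Fin 4) (σ : Fin n → Matrix (Fin 2) (Fin 2) ℂ),
    (∀ j, IsPauliFactor (σ j)) ∧ (∀ j, j ∉ A → σ j = σI) ∧
    M = Complex.I ^ (k : ℕ) • kron σ

/-- The Pauli `M` has identity (`j`-th Kronecker factor proportional to identity) at qubit `j`. -/
def PauliTrivialAt {n : ℕ} (M : QMat n) (j : Fin n) : Prop :=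
  PauliSupportedOn M {i | i ≠ j}

/-- The single-qubit operator `m` placed at qubit `j` (identity elsewhere). -/
def opAt {n : ℕ} (j : Fin n) (m : Matrix (Fin 2) (Fin 2) ℂ) : QMat n :=
  kron (fun i => if i = j then m else σI)

/-- Inner product `⟨φ, ψ⟩` (antilinear in the first argument). -/
def innerC {n : ℕ} (φ ψ : QVec n) : ℂ := ∑ v, (starRingEnd ℂ) (φ v) * ψ v

/-- Squared norm `‖ψ‖²`. -/
def nrmSq {n : ℕ} (ψ : QVec n) : ℝ := ∑ v, Complex.normSq (ψ v)

/-- The stabilizer group `𝒮(ψ) = {P ∈ 𝒫_n : Pψ = ψ}`. -/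
def stabGroup {n : ℕ} (ψ : QVec n) : Set (QMat n) :=
  {P | IsPauli P ∧ P.mulVec ψ = ψ}

/-- An `n`-qubit pure stabilizer state: a unit vector whose stabilizer group has `2^n` elements. -/
def IsStabState {n : ℕ} (ψ : QVec n) : Prop :=
  nrmSq ψ = 1 ∧ (stabGroup ψ).ncard = 2 ^ n

/-- The product `∏ i, g i ^ α i` (in the fixed order of indices). -/
def prodPow {n m : ℕ} (g : Fin m → QMat n) (α : Fin m → ZMod 2) : QMat n :=
  (List.ofFn fun i => g i ^ (α i).val).prod

/-- `g` is an independent generating set of `𝒮(ψ)`: the map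
`(α_i) ↦ ∏ g_i^{α_i}` is a bijection from `(ℤ/2)^m` onto `𝒮(ψ)`. -/
def IsIndepGenSet {n m : ℕ} (ψ : QVec n) (g : Fin m → QMat n) : Prop :=
  (∀ i, g i ∈ stabGroup ψ) ∧ Function.Injective (prodPow g) ∧
    Set.range (prodPow g) = stabGroup ψ

/-- The `T` gate `diag(1, e^{iπ/4})`. -/
def Tgate : Matrix (Fin 2) (Fin 2) ℂ :=
  !![1, 0; 0, Complex.exp (Real.pi * Complex.I / 4)]

theorem kron_mul {n : ℕ} (σ τ : Fin n → Matrix (Fin 2) (Fin 2) ℂ) :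
    kron σ * kron τ = kron (fun j => σ j * τ j) := by
  ext v w
  simp only [Matrix.mul_apply, kron, ← Finset.prod_mul_distrib]
  exact (Fintype.prod_sum fun j k => σ j (v j) k * τ j k (w j)).symm

theorem kron_smul {n : ℕ} (c : Fin n → ℂ) (σ : Fin n → Matrix (Fin 2) (Fin 2) ℂ) :
    kron (fun j => c j • σ j) = (∏ j, c j) • kron σ := by
  ext v w
  simp [kron, Finset.prod_mul_distrib]

theorem kron_one {n : ℕ} : kron (fun _ : Fin n => (1 : Matrix (Fin 2) (Fin 2) ℂ)) = 1 := by
  ext v w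
  by_cases h : v = w
  · subst h
    simp [kron]
  · obtain ⟨j, hj⟩ := Function.ne_iff.mp h
    rw [Matrix.one_apply_ne h]
    exact Finset.prod_eq_zero (Finset.mem_univ j) (Matrix.one_apply_ne hj)

theorem kron_conjTranspose {n : ℕ} (σ : Fin n → Matrix (Fin 2) (Fin 2) ℂ) :
    (kron σ)ᴴ = kron (fun j => (σ j)ᴴ) := by
  ext v w
  simp [kron, Matrix.conjTranspose_apply]

theorem trace_kron {n : ℕ} (σ : Fin n → Matrix (Fin 2) (Fin 2) ℂ) :
    (kron σ).trace = ∏ j, (σ j).trace := by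
  simp only [Matrix.trace, kron, Matrix.diag_apply]
  exact (Fintype.prod_sum fun j k => σ j k k).symm

namespace IsPauliFactor

variable {a b : Matrix (Fin 2) (Fin 2) ℂ}

theorem mul_self (ha : IsPauliFactor a) : a * a = 1 := by
  rcases ha with rfl | rfl | rfl | rfl <;>
    simp [σI, σX, σY, σZ, Matrix.one_fin_two]

theorem conjTranspose_eq (ha : IsPauliFactor a) : aᴴ = a := by
  rcases ha with rfl | rfl | rfl | rfl <;> ext i j <;> fin_cases i <;> fin_cases j <;>
    simp [σI, σX, σY, σZ]

theorem trace_eq_zero (ha : IsPauliFactor a) (h : a ≠ σI) : a.trace = 0 := by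
  rcases ha with rfl | rfl | rfl | rfl
  · exact absurd rfl h
  all_goals simp [σX, σY, σZ, Matrix.trace_fin_two]

theorem exists_mul_eq (ha : IsPauliFactor a) (hb : IsPauliFactor b) :
    ∃ (k : ℕ) (c : Matrix (Fin 2) (Fin 2) ℂ), IsPauliFactor c ∧ a * b = Complex.I ^ k • c := by
  have hI3 : Complex.I ^ 3 = -Complex.I := Complex.I_pow_three
  rcases ha with rfl | rfl | rfl | rfl
  · exact ⟨0, b, hb, by simp [σI]⟩
  · rcases hb with rfl | rfl | rfl | rfl
    · exact ⟨0, σX, by simp [IsPauliFactor], by simp [σI]⟩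
    · exact ⟨0, σI, by simp [IsPauliFactor], by simp [σI, σX, Matrix.one_fin_two]⟩
    · exact ⟨1, σZ, by simp [IsPauliFactor], by simp [σX, σY, σZ]⟩
    · exact ⟨3, σY, by simp [IsPauliFactor], by simp [σX, σY, σZ, hI3]⟩
  · rcases hb with rfl | rfl | rfl | rfl
    · exact ⟨0, σY, by simp [IsPauliFactor], by simp [σI]⟩
    · exact ⟨3, σZ, by simp [IsPauliFactor], by simp [σX, σY, σZ, hI3]⟩
    · exact ⟨0, σI, by simp [IsPauliFactor], by simp [σI, σY, Matrix.one_fin_two]⟩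
    · exact ⟨1, σX, by simp [IsPauliFactor], by simp [σX, σY, σZ]⟩
  · rcases hb with rfl | rfl | rfl | rfl
    · exact ⟨0, σZ, by simp [IsPauliFactor], by simp [σI]⟩
    · exact ⟨1, σY, by simp [IsPauliFactor], by simp [σX, σY, σZ]⟩
    · exact ⟨3, σX, by simp [IsPauliFactor], by simp [σX, σY, σZ, hI3]⟩
    · exact ⟨0, σI, by simp [IsPauliFactor], by simp [σI, σZ, Matrix.one_fin_two]⟩

theorem exists_mul_eq_smul_mul (ha : IsPauliFactor a) (hb : IsPauliFactor b) :
    ∃ ε : ℂ, a * b = ε • (b * a) := by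
  obtain ⟨k, c, hc, hab⟩ := ha.exists_mul_eq hb
  have hba : b * a = star (Complex.I ^ k) • c := by
    rw [← ha.conjTranspose_eq, ← hb.conjTranspose_eq, ← Matrix.conjTranspose_mul, hab,
      Matrix.conjTranspose_smul, hc.conjTranspose_eq]
  refine ⟨Complex.I ^ k * Complex.I ^ k, ?_⟩
  rw [hab, hba, smul_smul, star_pow, mul_assoc, ← mul_pow Complex.I]
  simp

end IsPauliFactor

namespace IsPauli

variable {n : ℕ} {P Q : QMat n}

theorem of_smul_kron (k : ℕ) {σ : Fin n → Matrix (Fin 2) (Fin 2) ℂ}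
    (hσ : ∀ j, IsPauliFactor (σ j)) : IsPauli (Complex.I ^ k • kron σ) :=
  ⟨⟨k % 4, Nat.mod_lt _ (by norm_num)⟩, σ, hσ, by rw [Complex.I_pow_eq_pow_mod]⟩

theorem mul (hP : IsPauli P) (hQ : IsPauli Q) : IsPauli (P * Q) := by
  obtain ⟨k, σ, hσ, rfl⟩ := hP
  obtain ⟨l, τ, hτ, rfl⟩ := hQ
  choose e c hc hmul using fun j => (hσ j).exists_mul_eq (hτ j)
  have h := of_smul_kron (k + l + ∑ j, e j) hc
  rwa [pow_add, pow_add, mul_smul, ← Finset.prod_pow_eq_pow_sum, ← kron_smul,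
    ← funext hmul, ← kron_mul, ← smul_mul_smul_comm] at h

theorem exists_mul_eq_smul_mul (hP : IsPauli P) (hQ : IsPauli Q) :
    ∃ ε : ℂ, P * Q = ε • (Q * P) := by
  obtain ⟨k, σ, hσ, rfl⟩ := hP
  obtain ⟨l, τ, hτ, rfl⟩ := hQ
  choose e he using fun j => (hσ j).exists_mul_eq_smul_mul (hτ j)
  refine ⟨∏ j, e j, ?_⟩
  rw [smul_mul_smul_comm, smul_mul_smul_comm, kron_mul, kron_mul, funext he, kron_smul,
    smul_comm, mul_comm (Complex.I ^ (k : ℕ))]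

theorem exists_mul_self_eq (hP : IsPauli P) : ∃ ε : ℂ, P * P = ε • (1 : QMat n) := by
  obtain ⟨k, σ, hσ, rfl⟩ := hP
  exact ⟨_, by rw [smul_mul_smul_comm, kron_mul, funext fun j => (hσ j).mul_self, kron_one]⟩

theorem conjTranspose_mul_self (hP : IsPauli P) : Pᴴ * P = 1 := by
  obtain ⟨k, σ, hσ, rfl⟩ := hP
  rw [Matrix.conjTranspose_smul, kron_conjTranspose, smul_mul_smul_comm, kron_mul]
  simp_rw [(hσ _).conjTranspose_eq, (hσ _).mul_self]
  rw [kron_one, star_pow, ← mul_pow]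
  simp

theorem trace_eq_zero_or_eq_smul_one (hP : IsPauli P) :
    P.trace = 0 ∨ ∃ ε : ℂ, P = ε • (1 : QMat n) := by
  obtain ⟨k, σ, hσ, rfl⟩ := hP
  by_cases h : ∀ j, σ j = σI
  · refine Or.inr ⟨Complex.I ^ (k : ℕ), ?_⟩
    rw [funext h]
    exact congrArg _ kron_one
  · push Not at h
    obtain ⟨j, hj⟩ := h
    left
    rw [Matrix.trace_smul, trace_kron,
      Finset.prod_eq_zero (Finset.mem_univ j) ((hσ j).trace_eq_zero hj), smul_zero]

end IsPauli

section Stabilizer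

variable {n : ℕ} {ψ : QVec n} {P Q : QMat n}

theorem ne_zero_of_nrmSq_eq_one (h : nrmSq ψ = 1) : ψ ≠ 0 := by
  rintro rfl
  simp [nrmSq] at h

theorem smul_eq_self_iff_eq_one (hψ : ψ ≠ 0) {ε : ℂ} : ε • ψ = ψ ↔ ε = 1 :=
  ⟨fun h => smul_left_injective ℂ hψ (h.trans (one_smul ℂ ψ).symm), fun h => by simp [h]⟩

theorem one_mem_stabGroup : (1 : QMat n) ∈ stabGroup ψ := by
  refine ⟨?_, Matrix.one_mulVec ψ⟩
  have h := IsPauli.of_smul_kron (n := n) 0 (σ := fun _ => 1) fun _ => Or.inl rfl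
  rwa [kron_one, pow_zero, one_smul] at h

theorem mul_mem_stabGroup (hP : P ∈ stabGroup ψ) (hQ : Q ∈ stabGroup ψ) :
    P * Q ∈ stabGroup ψ :=
  ⟨hP.1.mul hQ.1, by rw [← Matrix.mulVec_mulVec, hQ.2, hP.2]⟩

theorem mul_self_of_mem_stabGroup (hψ : ψ ≠ 0) (hP : P ∈ stabGroup ψ) : P * P = 1 := by
  obtain ⟨ε, h⟩ := hP.1.exists_mul_self_eq
  have h' := (mul_mem_stabGroup hP hP).2
  rw [h, Matrix.smul_mulVec, Matrix.one_mulVec, smul_eq_self_iff_eq_one hψ] at h'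
  rw [h, h', one_smul]

theorem mul_comm_of_mem_stabGroup (hψ : ψ ≠ 0) (hP : P ∈ stabGroup ψ) (hQ : Q ∈ stabGroup ψ) :
    P * Q = Q * P := by
  obtain ⟨ε, h⟩ := hP.1.exists_mul_eq_smul_mul hQ.1
  have h' := (mul_mem_stabGroup hP hQ).2
  rw [h, Matrix.smul_mulVec, (mul_mem_stabGroup hQ hP).2, smul_eq_self_iff_eq_one hψ] at h'
  rw [h, h', one_smul]

theorem trace_eq_zero_of_mem_stabGroup (hψ : ψ ≠ 0) (hP : P ∈ stabGroup ψ) (h1 : P ≠ 1) :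
    P.trace = 0 := by
  refine hP.1.trace_eq_zero_or_eq_smul_one.resolve_right ?_
  rintro ⟨ε, rfl⟩
  have h := hP.2
  rw [Matrix.smul_mulVec, Matrix.one_mulVec, smul_eq_self_iff_eq_one hψ] at h
  exact h1 (by rw [h, one_smul])

/-- The vectors fixed by every element of the stabilizer group of `ψ`. -/
def stabFixed (ψ : QVec n) : Submodule ℂ (QVec n) where
  carrier := {χ | ∀ P ∈ stabGroup ψ, P.mulVec χ = χ}
  add_mem' ha hb P hP := by rw [Matrix.mulVec_add, ha P hP, hb P hP]
  zero_mem' P _ := Matrix.mulVec_zero P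
  smul_mem' c x hx P hP := by rw [Matrix.mulVec_smul, hx P hP]

theorem mem_stabFixed {χ : QVec n} :
    χ ∈ stabFixed ψ ↔ ∀ P ∈ stabGroup ψ, P.mulVec χ = χ := Iff.rfl

/-- The average of the stabilizer group of a stabilizer state is a projection of trace one onto
its fixed space. -/
theorem finrank_stabFixed (h : IsStabState ψ) : Module.finrank ℂ (stabFixed ψ) = 1 := by
  have hψ := ne_zero_of_nrmSq_eq_one h.1
  have hfin : (stabGroup ψ).Finite := Set.finite_of_ncard_ne_zero (by rw [h.2]; positivity)
  set S := hfin.toFinset with hS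
  have hmem : ∀ {P}, P ∈ S ↔ P ∈ stabGroup ψ := by simp [hS]
  have hcard : (S.card : ℂ) = 2 ^ n := by
    rw [hS, ← Set.ncard_eq_toFinset_card _ hfin, h.2]
    push_cast
    rfl
  set proj : QMat n := (2 ^ n : ℂ)⁻¹ • ∑ P ∈ S, P with hproj
  have hmul : ∀ Q ∈ stabGroup ψ, Q * proj = proj := by
    intro Q hQ
    rw [hproj, Matrix.mul_smul, Finset.mul_sum]
    have hQQ : ∀ P, Q * (Q * P) = P := fun P => by
      rw [← mul_assoc, mul_self_of_mem_stabGroup hψ hQ, one_mul]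
    congr 1
    exact Finset.sum_nbij' (Q * ·) (Q * ·)
      (fun P hP => hmem.2 (mul_mem_stabGroup hQ (hmem.1 hP)))
      (fun P hP => hmem.2 (mul_mem_stabGroup hQ (hmem.1 hP)))
      (fun P _ => hQQ P) (fun P _ => hQQ P) (fun _ _ => rfl)
  have hP : LinearMap.IsProj (stabFixed ψ) (Matrix.toLin' proj) := by
    refine ⟨fun x Q hQ => ?_, fun x hx => ?_⟩
    · rw [Matrix.toLin'_apply, Matrix.mulVec_mulVec, hmul Q hQ]
    · rw [Matrix.toLin'_apply, hproj, Matrix.smul_mulVec, Matrix.sum_mulVec,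
        Finset.sum_congr rfl fun P hP => hx P (hmem.1 hP), Finset.sum_const,
        ← Nat.cast_smul_eq_nsmul ℂ, hcard, smul_smul, inv_mul_cancel₀ (by simp), one_smul]
  have htr : proj.trace = 1 := by
    rw [hproj, Matrix.trace_smul, Matrix.trace_sum,
      Finset.sum_eq_single_of_mem 1 (hmem.2 one_mem_stabGroup)
        fun P hP h1 => trace_eq_zero_of_mem_stabGroup hψ (hmem.1 hP) h1]
    simp
  have := hP.trace
  rw [Matrix.trace_toLin'_eq, htr] at this
  exact_mod_cast this.symm

theorem exists_smul_eq_of_mem_stabFixed (h : IsStabState ψ) {χ : QVec n}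
    (hχ : χ ∈ stabFixed ψ) : ∃ c : ℂ, χ = c • ψ := by
  have hψ : (⟨ψ, fun P hP => hP.2⟩ : stabFixed ψ) ≠ 0 := fun h0 =>
    ne_zero_of_nrmSq_eq_one h.1 (congrArg Subtype.val h0)
  obtain ⟨c, hc⟩ := (finrank_eq_one_iff_of_nonzero' _ hψ).1 (finrank_stabFixed h) ⟨χ, hχ⟩
  exact ⟨c, (congrArg Subtype.val hc).symm⟩

theorem mem_stabFixed_of_isIndepGenSet {m : ℕ} {g : Fin m → QMat n} (hg : IsIndepGenSet ψ g)
    {χ : QVec n} (hχ : ∀ i, (g i).mulVec χ = χ) : χ ∈ stabFixed ψ := by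
  let F : Submonoid (QMat n) :=
    { carrier := {M | M.mulVec χ = χ}
      one_mem' := Matrix.one_mulVec χ
      mul_mem' := fun {a b} (ha : a.mulVec χ = χ) (hb : b.mulVec χ = χ) =>
        show (a * b).mulVec χ = χ by rw [← Matrix.mulVec_mulVec, hb, ha] }
  rw [mem_stabFixed, ← hg.2.2]
  rintro _ ⟨α, rfl⟩
  refine F.list_prod_mem fun M hM => ?_
  obtain ⟨i, rfl⟩ := List.mem_ofFn.1 hM
  exact F.pow_mem (hχ i) _

end Stabilizer

theorem innerC_eq_dotProduct {n : ℕ} (φ ψ : QVec n) : innerC φ ψ = star φ ⬝ᵥ ψ := rfl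

theorem innerC_self {n : ℕ} (ψ : QVec n) : innerC ψ ψ = nrmSq ψ := by
  simp [innerC, nrmSq, Complex.normSq_eq_conj_mul_self]

theorem innerC_mulVec_mulVec {n : ℕ} (M N : QMat n) (φ ψ : QVec n) :
    innerC (M.mulVec φ) (N.mulVec ψ) = innerC φ ((Mᴴ * N).mulVec ψ) := by
  simp only [innerC_eq_dotProduct, Matrix.star_mulVec, ← Matrix.dotProduct_mulVec,
    Matrix.mulVec_mulVec]

theorem innerC_smul_left {n : ℕ} (c : ℂ) (φ ψ : QVec n) :
    innerC (c • φ) ψ = star c * innerC φ ψ := by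
  simp [innerC_eq_dotProduct]

theorem innerC_smul_right {n : ℕ} (c : ℂ) (φ ψ : QVec n) :
    innerC φ (c • ψ) = c * innerC φ ψ := by
  simp [innerC_eq_dotProduct]

theorem innerC_add_right {n : ℕ} (φ ψ χ : QVec n) :
    innerC φ (ψ + χ) = innerC φ ψ + innerC φ χ := by
  simp [innerC_eq_dotProduct]

theorem innerC_add_left {n : ℕ} (φ ψ χ : QVec n) :
    innerC (φ + ψ) χ = innerC φ χ + innerC ψ χ := by
  simp [innerC_eq_dotProduct]

theorem opAt_σZ_conjTranspose {n : ℕ} (j : Fin n) : (opAt j σZ)ᴴ = opAt j σZ := by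
  rw [opAt, kron_conjTranspose]
  congr 1
  funext i
  refine IsPauliFactor.conjTranspose_eq ?_
  split_ifs <;> simp [IsPauliFactor]

/-- A unit vector fixed by an involution `Z` that anticommutes with `g 0`, and by the remaining
generators, spans the same line as the projection of `ψ` to the `+1` eigenspace of `Z`. -/
theorem innerC_eigenvector_component {n : ℕ} [NeZero n] {ψ : QVec n} (hψ : IsStabState ψ)
    {g : Fin n → QMat n} (hg : IsIndepGenSet ψ g) {Z : QMat n} (hZ : Zᴴ = Z)
    (hanti : Z * g 0 = -(g 0 * Z)) {φ : QVec n} (hφ : nrmSq φ = 1)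
    (hZφ : Z.mulVec φ = φ) (hgφ : ∀ i, i ≠ 0 → (g i).mulVec φ = φ) :
    Complex.normSq (innerC φ ψ) = 1 / 2 ∧
      innerC φ ψ • φ = (1 / 2 : ℂ) • (ψ + Z.mulVec ψ) := by
  have hψ0 := ne_zero_of_nrmSq_eq_one hψ.1
  have hs := hg.1 0
  have hfix : φ + (g 0).mulVec φ ∈ stabFixed ψ := by
    refine mem_stabFixed_of_isIndepGenSet hg fun i => ?_
    rw [Matrix.mulVec_add, Matrix.mulVec_mulVec]
    by_cases hi : i = 0
    · rw [hi, mul_self_of_mem_stabGroup hψ0 hs, Matrix.one_mulVec, add_comm]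
    · rw [mul_comm_of_mem_stabGroup hψ0 (hg.1 i) hs, ← Matrix.mulVec_mulVec, hgφ i hi]
  obtain ⟨c, hc⟩ := exists_smul_eq_of_mem_stabFixed hψ hfix
  have hZsφ : Z.mulVec ((g 0).mulVec φ) = -(g 0).mulVec φ := by
    rw [Matrix.mulVec_mulVec, hanti, Matrix.neg_mulVec, ← Matrix.mulVec_mulVec, hZφ]
  have hφc : φ = (c / 2) • (ψ + Z.mulVec ψ) := by
    have h := congrArg Z.mulVec hc
    rw [Matrix.mulVec_add, hZφ, hZsφ, Matrix.mulVec_smul] at h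
    rw [div_eq_inv_mul, mul_smul, smul_add, ← h, ← hc]
    module
  have hexp : innerC ψ (Z.mulVec ψ) = 0 := by
    have h := innerC_mulVec_mulVec (g 0) (Z * g 0) ψ ψ
    rw [← Matrix.mulVec_mulVec, hs.2, hanti, Matrix.mul_neg, ← mul_assoc,
      hs.1.conjTranspose_mul_self, one_mul, Matrix.neg_mulVec] at h
    have hneg : innerC ψ (-Z.mulVec ψ) = -innerC ψ (Z.mulVec ψ) := by
      simp [innerC_eq_dotProduct]
    rw [hneg] at h
    exact self_eq_neg.1 h
  have hexp' : innerC (Z.mulVec ψ) ψ = 0 := by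
    have h := innerC_mulVec_mulVec Z 1 ψ ψ
    rwa [Matrix.one_mulVec, hZ, mul_one, hexp] at h
  have hone : innerC ψ ψ = 1 := by rw [innerC_self, hψ.1, Complex.ofReal_one]
  have hin : innerC φ ψ = star c / 2 := by
    conv_lhs => rw [hφc]
    rw [innerC_smul_left, innerC_add_left, hexp', hone]
    simp
  have hcc : star c * c = 2 := by
    have hZ1 : innerC φ (Z.mulVec ψ) = innerC φ ψ := by
      have h := innerC_mulVec_mulVec Z 1 φ ψ
      rwa [hZφ, Matrix.one_mulVec, hZ, mul_one, eq_comm] at h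
    have h : innerC φ φ = 1 := by rw [innerC_self, hφ, Complex.ofReal_one]
    have h2 : innerC φ φ = c / 2 * (innerC φ ψ + innerC φ (Z.mulVec ψ)) := by
      rw [← innerC_add_right, ← innerC_smul_right, ← hφc]
    rw [h, hZ1, hin] at h2
    linear_combination -2 * h2
  constructor
  · apply Complex.ofReal_injective
    rw [Complex.normSq_eq_conj_mul_self, hin]
    simp only [map_div₀, starRingEnd_apply, star_star]
    push_cast
    simp only [star_ofNat]
    linear_combination hcc / 4
  · conv_lhs => rw [hin, hφc]
    rw [smul_smul]
    congr 1
    linear_combination hcc / 4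

/-- **Equal-weight stabilizer decomposition** (App. B 1): if `ψ` is a stabilizer
state with independent generating set `s_1 = g 0, g_2, …, g_n` such that `Z_1`
anticommutes with `s_1` and commutes with each `g_i` (`i ≥ 2`), and `ψ_±` are
unit vectors stabilized by the groups generated by `{±Z_1, g_2, …, g_n}`
respectively, then `|⟨ψ_+, ψ⟩|² = |⟨ψ_−, ψ⟩|² = 1/2` and
`ψ = ⟨ψ_+, ψ⟩·ψ_+ + ⟨ψ_−, ψ⟩·ψ_−`. -/
theorem equal_weight_stabilizer_superposition {n : ℕ} [NeZero n]
    (ψ : QVec n) (hψ : IsStabState ψ)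
    (g : Fin n → QMat n) (hg : IsIndepGenSet ψ g)
    (hanti : opAt (0 : Fin n) σZ * g 0 = -(g 0 * opAt (0 : Fin n) σZ))
    (hcomm : ∀ i : Fin n, i ≠ 0 →
      opAt (0 : Fin n) σZ * g i = g i * opAt (0 : Fin n) σZ)
    (ψp ψm : QVec n) (hψp : nrmSq ψp = 1) (hψm : nrmSq ψm = 1)
    (hstabp : ∀ P ∈ Submonoid.closure
        (insert (opAt (0 : Fin n) σZ) {Q : QMat n | ∃ i : Fin n, i ≠ 0 ∧ Q = g i}),
      P.mulVec ψp = ψp)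
    (hstabm : ∀ P ∈ Submonoid.closure
        (insert (-(opAt (0 : Fin n) σZ)) {Q : QMat n | ∃ i : Fin n, i ≠ 0 ∧ Q = g i}),
      P.mulVec ψm = ψm) :
    Complex.normSq (innerC ψp ψ) = 1 / 2 ∧
    Complex.normSq (innerC ψm ψ) = 1 / 2 ∧
    ψ = innerC ψp ψ • ψp + innerC ψm ψ • ψm := by
  have hgen (Q : QMat n) (i : Fin n) (hi : i ≠ 0) :
      g i ∈ Submonoid.closure (insert Q {Q : QMat n | ∃ i : Fin n, i ≠ 0 ∧ Q = g i}) :=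
    Submonoid.subset_closure (Set.mem_insert_of_mem _ ⟨i, hi, rfl⟩)
  have hZ := opAt_σZ_conjTranspose (0 : Fin n)
  obtain ⟨hp, hp'⟩ := innerC_eigenvector_component hψ hg hZ hanti hψp
    (hstabp _ (Submonoid.subset_closure (Set.mem_insert _ _)))
    fun i hi => hstabp _ (hgen _ i hi)
  obtain ⟨hm, hm'⟩ := innerC_eigenvector_component hψ hg (Z := -opAt (0 : Fin n) σZ)
    (by rw [Matrix.conjTranspose_neg, hZ]) (by rw [Matrix.neg_mul, hanti, Matrix.mul_neg]) hψm
    (hstabm _ (Submonoid.subset_closure (Set.mem_insert _ _)))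
    fun i hi => hstabm _ (hgen _ i hi)
  refine ⟨hp, hm, ?_⟩
  rw [hp', hm', Matrix.neg_mulVec]
  module

end PaperFormal
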